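/- Define integer arrays z(n,k) and r(n,k) recursively as follows: z(n,k) = 0 for k < 0 or k > n, z(n,n) = (2n-1)!! for n ≥ 0, and z(n,k) = n·z(n-1,k) + (n+k-1)·z(n-1,k-1) for 1 ≤ k < n; r(n,k) satisfies Shor's recursion r(n,k) = (n-1)·r(n-1,k) + (n+k-2)·r(n-1,k-1) with r(1,0) = 1, r(1,k) = 0 for k ≠ 0, and r(n,k) = 0 for k < 0 or k ≥ n. Then z(n,k) = r(n+1,k) for all integers 0 ≤ k ≤ n. -/

import Mathlib

/-- The array `z(n,k)` : `z(n,k) = 0` for `k > n` (and for `k < 0`, encoded by dropping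
the `z(n-1, k-1)` term when `k = 0`), `z(n,n) = (2n-1)!!` for `n ≥ 0`, and
`z(n,k) = n·z(n-1,k) + (n+k-1)·z(n-1,k-1)` for `1 ≤ k < n`. -/
def zArr : ℕ → ℕ → ℕ
  | 0, k => if k = 0 then Nat.doubleFactorial (2 * 0 - 1) else 0
  | n + 1, k =>
    if n + 1 < k then 0
    else if k = n + 1 then Nat.doubleFactorial (2 * (n + 1) - 1)
    else (n + 1) * zArr n k +
      (if k = 0 then 0 else ((n + 1) + k - 1) * zArr n (k - 1))

/-- Shor's array `r(n,k)` : `r(1,0) = 1`, `r(1,k) = 0` for `k ≠ 0`, `r(n,k) = 0` for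
`k ≥ n` (and for `k < 0`, encoded by dropping the `r(n-1, k-1)` term when `k = 0`), and
`r(n,k) = (n-1)·r(n-1,k) + (n+k-2)·r(n-1,k-1)`. -/
def rArr : ℕ → ℕ → ℕ
  | 0, _ => 0
  | 1, k => if k = 0 then 1 else 0
  | n + 2, k =>
    if n + 2 ≤ k then 0
    else ((n + 2) - 1) * rArr (n + 1) k +
      (if k = 0 then 0 else ((n + 2) + k - 2) * rArr (n + 1) (k - 1))

theorem zArr_diag (n : ℕ) : zArr n n = Nat.doubleFactorial (2 * n - 1) := by
  cases n with
  | zero => simp [zArr]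
  | succ n => simp [zArr]

theorem rArr_zero_of_le (n k : ℕ) (h : n + 1 ≤ k) : rArr (n + 1) k = 0 := by
  cases n with
  | zero =>
    have : k ≠ 0 := by omega
    simp [rArr, this]
  | succ n => rw [rArr, if_pos h]

theorem doubleFactorial_step (n : ℕ) :
    Nat.doubleFactorial (2 * (n + 1) - 1) = (2 * n + 1) * Nat.doubleFactorial (2 * n - 1) := by
  cases n with
  | zero => simp
  | succ m =>
    have h1 : 2 * (m + 1 + 1) - 1 = (2 * m + 1) + 2 := by omega
    have h2 : 2 * (m + 1) - 1 = 2 * m + 1 := by omega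
    rw [h1, h2, Nat.doubleFactorial_add_two]
    ring

/-- `z(n,k) = r(n+1,k)` for all `0 ≤ k ≤ n`. -/
theorem z_eq_r (n k : ℕ) (hkn : k ≤ n) : zArr n k = rArr (n + 1) k := by
  induction n generalizing k with
  | zero =>
    obtain rfl : k = 0 := by omega
    simp [zArr, rArr]
  | succ n ih =>
    rw [rArr, if_neg (by omega : ¬ n + 2 ≤ k)]
    by_cases hk : k = n + 1
    · subst hk
      rw [zArr_diag, rArr_zero_of_le n (n + 1) le_rfl, if_neg (by omega : ¬ n + 1 = 0),
        show n + 1 - 1 = n from rfl, ← ih n le_rfl, zArr_diag, doubleFactorial_step,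
        show n + 2 + (n + 1) - 2 = 2 * n + 1 by omega]
      ring
    · rw [zArr, if_neg (by omega : ¬ n + 1 < k), if_neg hk, ih k (by omega),
        ih (k - 1) (by omega), show n + 2 - 1 = n + 1 from rfl,
        show n + 2 + k - 2 = n + 1 + k - 1 by omega]
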